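/- arXiv:2311.07728 — 5 statements merged into one kernel-verified Lean document; each statement's English description precedes it below -/
import Mathlib

section
/- Let g ≥ 2 and let Γ_g be the genus-g surface group. If V is an ℝ-linear subspace of Hom(Γ_g, ℝ) such that f ∘ φ ∈ V for every f ∈ V and every group automorphism φ of Γ_g, then either V = {0} or V = Hom(Γ_g, ℝ). (This is the key linear step in the proof of Theorem A: the subspace of homomorphisms is the unique nonzero finite-dimensional Aut(Γ)-invariant subspace among spaces of homomorphisms; it is proved via the surjection of the mapping class group onto Sp(2g,ℤ) and the irreducibility of the Sp(2g,ℤ)-action on ℝ^{2g}.) -/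
open scoped commutatorElement

/-- The single defining relator `[a₁,b₁][a₂,b₂]⋯[a_g,b_g]` of the genus-`g` surface group,
as an element of the free group on generators `a_i = (i, true)`, `b_i = (i, false)`. -/
def surfaceRelator (g : ℕ) : FreeGroup (Fin g × Bool) :=
  ((List.finRange g).map
    (fun i => ⁅FreeGroup.of (i, true), FreeGroup.of (i, false)⁆)).prod

/-- The genus-`g` surface group
`⟨a₁,b₁,…,a_g,b_g | [a₁,b₁][a₂,b₂]⋯[a_g,b_g]⟩`. -/
abbrev SurfaceGroup (g : ℕ) : Type :=
  PresentedGroup ({surfaceRelator g} : Set (FreeGroup (Fin g × Bool)))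

/-! An additive function on `Γ_g` is freely determined by its values on the generators, so we may
speak of its coordinates. The transvection `a_i ↦ a_i b_i` changes `f` by the function whose only
nonzero coordinate is `f b_i`, placed at `a_i`; the transvection `b_i ↦ b_i a_i` does the same with
the roles exchanged. The relator is a product over `i`, so up to conjugation it is invariant under
cyclic shifts of the index, and these automorphisms move a coordinate to any other handle. Hence
an invariant `V` consists of all `f` with values in one fixed submodule of the target, which is
trivial or everything when the target is a simple module. -/

section AdditiveFunctions

/-- The module `Hom(G, M)` of multiplicative-to-additive homomorphisms, realised inside
the module of all functions so that it can be compared with arbitrary function spaces. -/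
def homSubmodule (R G M : Type*) [Semiring R] [Mul G] [AddCommMonoid M] [Module R M] :
    Submodule R (G → M) where
  carrier := {f | ∀ x y, f (x * y) = f x + f y}
  zero_mem' _ _ := (add_zero 0).symm
  add_mem' hf hf' x y := by simp only [Pi.add_apply, hf x y, hf' x y, add_add_add_comm]
  smul_mem' r _ hf x y := by simp only [Pi.smul_apply, hf x y, smul_add]

/-- Invariance of a space of functions on `G` under the action of `Aut(G)` by precomposition. -/
def IsAutInvariant {R G M : Type*} [Semiring R] [Mul G] [AddCommMonoid M] [Module R M]
    (V : Submodule R (G → M)) : Prop :=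
  ∀ f ∈ V, ∀ φ : G ≃* G, (fun x => f (φ x)) ∈ V

theorem comp_mem_homSubmodule {R G H M F : Type*} [Semiring R] [Mul G] [Mul H]
    [AddCommMonoid M] [Module R M] [FunLike F H G] [MulHomClass F H G] {f : G → M}
    (hf : f ∈ homSubmodule R G M) (φ : F) : (fun x => f (φ x)) ∈ homSubmodule R H M :=
  fun x y => (congrArg f (map_mul φ x y)).trans (hf _ _)

/-- An element of `homSubmodule`, as a bundled homomorphism to the multiplicative copy of the
target. -/
def homSubmodule.toMonoidHom {R G M : Type*} [Semiring R] [Group G] [AddCommGroup M]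
    [Module R M] (f : homSubmodule R G M) : G →* Multiplicative M :=
  MonoidHom.mk' (fun x => Multiplicative.ofAdd (f.1 x)) fun x y =>
    congrArg Multiplicative.ofAdd (f.2 x y)

end AdditiveFunctions

section Commutator

variable {G : Type*} [Group G] {x y z : G}

theorem commutatorElement_mul_left_of_commute (h : Commute z y) : ⁅x * z, y⁆ = ⁅x, y⁆ := by
  simp [commutatorElement_mul_left_eq_conj_mul, commutatorElement_eq_one_iff_commute.2 h]

theorem commutatorElement_mul_right_of_commute (h : Commute x z) : ⁅x, y * z⁆ = ⁅x, y⁆ := by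
  simp [commutatorElement_mul_right_eq_mul_conj, commutatorElement_eq_one_iff_commute.2 h]

end Commutator

theorem finRange_map_add_right {n : ℕ} [NeZero n] (k : Fin n) :
    (List.finRange n).map (· + k) = (List.finRange n).rotate k := by
  refine List.ext_getElem (by simp) fun i _ _ => ?_
  simp [List.getElem_rotate, Fin.ext_iff, Fin.val_add]

namespace SurfaceGroup

variable {g : ℕ}

/-- The standard generators `a_i = gen (i, true)` and `b_i = gen (i, false)`. -/
abbrev gen (x : Fin g × Bool) : SurfaceGroup g := PresentedGroup.of x

section Homs

variable {G H : Type*} [Group G] [Group H]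

/-- The word `[a₁,b₁]⋯[a_g,b_g]` evaluated at a family of elements of an arbitrary group. -/
def commutatorProd (h : Fin g × Bool → G) : G :=
  ((List.finRange g).map fun i => ⁅h (i, true), h (i, false)⁆).prod

theorem map_commutatorProd (φ : G →* H) (h : Fin g × Bool → G) :
    φ (commutatorProd h) = commutatorProd (φ ∘ h) := by
  simp [commutatorProd, map_list_prod, Function.comp_def, map_commutatorElement]

theorem commutatorProd_gen : commutatorProd (gen (g := g)) = 1 :=
  (map_commutatorProd (PresentedGroup.mk _) FreeGroup.of).symm.trans
    (PresentedGroup.one_of_mem rfl)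

theorem commutatorProd_eq_one {A : Type*} [CommGroup A] (h : Fin g × Bool → A) :
    commutatorProd h = 1 :=
  List.prod_eq_one <| by simp [commutatorElement_def]

/-- The homomorphism out of the surface group prescribed by the images of the generators. -/
def lift (h : Fin g × Bool → G) (hh : commutatorProd h = 1) : SurfaceGroup g →* G :=
  PresentedGroup.toGroup (f := h) <| by
    rintro _ rfl
    refine (map_commutatorProd (FreeGroup.lift h) FreeGroup.of).trans ?_
    rwa [show FreeGroup.lift h ∘ FreeGroup.of = h from funext fun _ => FreeGroup.lift_apply_of]

@[simp]
theorem lift_gen (h : Fin g × Bool → G) (hh : commutatorProd h = 1) (x : Fin g × Bool) :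
    lift h hh (gen x) = h x :=
  PresentedGroup.toGroup.of _

end Homs

section Rotation

variable [NeZero g]

theorem commutatorProd_gen_add (k : Fin g) :
    commutatorProd (fun x : Fin g × Bool => gen (x.1 + k, x.2)) = 1 := by
  have h := List.prod_rotate_eq_one_of_prod_eq_one (commutatorProd_gen (g := g)) k
  rwa [← List.map_rotate, ← finRange_map_add_right, List.map_map] at h

/-- The automorphism `a_i ↦ a_{i+k}`, `b_i ↦ b_{i+k}`, with indices read modulo `g`. -/
def rotation (k : Fin g) : SurfaceGroup g ≃* SurfaceGroup g :=
  MonoidHom.toMulEquiv (lift _ (commutatorProd_gen_add k)) (lift _ (commutatorProd_gen_add (-k)))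
    (PresentedGroup.ext fun x => by simp) (PresentedGroup.ext fun x => by simp)

@[simp]
theorem rotation_gen (k : Fin g) (x : Fin g × Bool) :
    rotation k (gen x) = gen (x.1 + k, x.2) :=
  lift_gen _ (commutatorProd_gen_add k) x

end Rotation

section Transvection

/-- The images of the generators under the `n`-th power of the transvection at `(i, c)`, which
multiplies the generator `(i, c)` by the other generator of its handle. -/
def transvectionFun (i : Fin g) (c : Bool) (n : ℤ) : Fin g × Bool → SurfaceGroup g :=
  Function.update gen (i, c) (gen (i, c) * gen (i, !c) ^ n)

theorem commutatorProd_transvectionFun (i : Fin g) (c : Bool) (n : ℤ) :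
    commutatorProd (transvectionFun i c n) = 1 := by
  rw [← commutatorProd_gen]
  refine congrArg List.prod (List.map_congr_left fun j _ => ?_)
  obtain rfl | hj := eq_or_ne j i
  · cases c
    · simpa [transvectionFun] using
        commutatorElement_mul_right_of_commute ((Commute.refl _).zpow_right n)
    · simpa [transvectionFun] using
        commutatorElement_mul_left_of_commute ((Commute.refl _).zpow_left n)
  · simp [transvectionFun, hj]

theorem lift_transvectionFun_neg (i : Fin g) (c : Bool) (n : ℤ) (x : Fin g × Bool) :
    lift _ (commutatorProd_transvectionFun i c n) (transvectionFun i c (-n) x) = gen x := by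
  obtain rfl | hx := eq_or_ne x (i, c) <;> simp [transvectionFun, *]

/-- The Dehn twist `a_i ↦ a_i b_i` (for `c = true`) or `b_i ↦ b_i a_i` (for `c = false`), fixing
the other generators. -/
def transvection (i : Fin g) (c : Bool) : SurfaceGroup g ≃* SurfaceGroup g :=
  MonoidHom.toMulEquiv (lift _ (commutatorProd_transvectionFun i c 1))
    (lift _ (commutatorProd_transvectionFun i c (-1)))
    (PresentedGroup.ext fun x => by simpa using lift_transvectionFun_neg i c (-1) x)
    (PresentedGroup.ext fun x => by simpa using lift_transvectionFun_neg i c 1 x)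

theorem transvection_gen_self (i : Fin g) (c : Bool) :
    transvection i c (gen (i, c)) = gen (i, c) * gen (i, !c) :=
  (lift_gen _ (commutatorProd_transvectionFun i c 1) _).trans (by simp [transvectionFun])

theorem transvection_gen_of_ne {i : Fin g} {c : Bool} {x : Fin g × Bool} (hx : x ≠ (i, c)) :
    transvection i c (gen x) = gen x :=
  (lift_gen _ (commutatorProd_transvectionFun i c 1) _).trans (by simp [transvectionFun, hx])

end Transvection

section Coordinates

variable {R M : Type*} [Semiring R] [AddCommGroup M] [Module R M] {f f' : SurfaceGroup g → M}

theorem homSubmodule_ext (hf : f ∈ homSubmodule R _ M) (hf' : f' ∈ homSubmodule R _ M)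
    (h : ∀ x, f (gen x) = f' (gen x)) : f = f' :=
  have hom_eq : homSubmodule.toMonoidHom ⟨f, hf⟩ = homSubmodule.toMonoidHom ⟨f', hf'⟩ :=
    PresentedGroup.ext fun x => congrArg Multiplicative.ofAdd (h x)
  funext fun z => congrArg Multiplicative.toAdd (DFunLike.congr_fun hom_eq z)

variable (g R M) in
/-- The isomorphism `Hom(Γ_g, M) ≃ M^{2g}` given by evaluation at the generators. -/
noncomputable def coords : homSubmodule R (SurfaceGroup g) M ≃ₗ[R] (Fin g × Bool → M) :=
  LinearEquiv.ofBijective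
    { toFun f x := f.1 (gen x)
      map_add' _ _ := rfl
      map_smul' _ _ := rfl }
    ⟨fun f f' h => Subtype.ext (homSubmodule_ext f.2 f'.2 (congrFun h)), fun v =>
      let φ : SurfaceGroup g →* Multiplicative M :=
        lift (fun x => Multiplicative.ofAdd (v x)) (commutatorProd_eq_one _)
      ⟨⟨fun z => (φ z).toAdd, fun x y => congrArg Multiplicative.toAdd (map_mul φ x y)⟩,
        funext fun x => congrArg Multiplicative.toAdd (lift_gen _ _ x)⟩⟩

variable (R) in
/-- The homomorphism `Γ_g → M` with value `m` at the generator `x` and `0` at all others, as a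
linear function of `m`. -/
noncomputable def single (x : Fin g × Bool) : M →ₗ[R] (SurfaceGroup g → M) :=
  (homSubmodule R _ M).subtype ∘ₗ (coords g R M).symm ∘ₗ LinearMap.single R (fun _ => M) x

theorem single_mem_homSubmodule (x : Fin g × Bool) (m : M) :
    single R x m ∈ homSubmodule R _ M :=
  ((coords g R M).symm (Pi.single x m)).2

@[simp]
theorem single_gen (x y : Fin g × Bool) (m : M) :
    single R x m (gen y) = (Pi.single x m : Fin g × Bool → M) y :=
  congrFun ((coords g R M).apply_symm_apply (Pi.single x m)) y

theorem sum_single_apply_gen (hf : f ∈ homSubmodule R _ M) :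
    ∑ x, single R x (f (gen x)) = f :=
  homSubmodule_ext (Submodule.sum_mem _ fun x _ => single_mem_homSubmodule x _) hf fun y => by
    simp [Finset.sum_apply, Finset.sum_pi_single]

theorem single_comp_rotation [NeZero g] (i k : Fin g) (c : Bool) (m : M) :
    (fun z => single R (i + k, c) m (rotation k z)) = single R (i, c) m :=
  homSubmodule_ext (comp_mem_homSubmodule (single_mem_homSubmodule _ _) _)
      (single_mem_homSubmodule _ _) <| by
    rintro ⟨j, d⟩
    simp [Pi.single_apply]

/-- The values that the members of `V` supported on the single generator `x` take there. -/
noncomputable def singleValues (V : Submodule R (SurfaceGroup g → M)) (x : Fin g × Bool) :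
    Submodule R M :=
  V.comap (single R x)

theorem singleValues_le_of_snd_eq {V : Submodule R (SurfaceGroup g → M)}
    (hinv : IsAutInvariant V) (i j : Fin g) (c : Bool) :
    singleValues V (i, c) ≤ singleValues V (j, c) := by
  have : NeZero g := i.neZero
  intro m hm
  obtain ⟨k, rfl⟩ : ∃ k, i = j + k := ⟨i - j, (add_sub_cancel j i).symm⟩
  have hcomp := hinv _ hm (rotation k)
  rwa [single_comp_rotation] at hcomp

end Coordinates

section InvariantSubmodules

variable {R M : Type*} [Ring R] [AddCommGroup M] [Module R M]
  {V : Submodule R (SurfaceGroup g → M)} {f : SurfaceGroup g → M}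

theorem apply_mem_of_apply_gen_mem (hf : f ∈ homSubmodule R _ M) {N : Submodule R M}
    (h : ∀ x, f (gen x) ∈ N) (z : SurfaceGroup g) : f z ∈ N :=
  PresentedGroup.generated_by _
    ((AddSubgroup.toSubgroup N.toAddSubgroup).comap (homSubmodule.toMonoidHom ⟨f, hf⟩)) h z

theorem comp_transvection_sub (hf : f ∈ homSubmodule R _ M) (i : Fin g) (c : Bool) :
    (fun z => f (transvection i c z)) - f = single R (i, c) (f (gen (i, !c))) :=
  homSubmodule_ext (Submodule.sub_mem _ (comp_mem_homSubmodule hf _) hf)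
      (single_mem_homSubmodule _ _) fun x => by
    obtain rfl | hx := eq_or_ne x (i, c)
    · simp [transvection_gen_self, hf _ _]
    · simp [transvection_gen_of_ne hx, hx]

theorem apply_gen_mem_singleValues_not (hV : V ≤ homSubmodule R _ M) (hinv : IsAutInvariant V)
    (hf : f ∈ V) (i : Fin g) (c : Bool) : f (gen (i, !c)) ∈ singleValues V (i, c) := by
  rw [singleValues, Submodule.mem_comap, ← comp_transvection_sub (hV hf)]
  exact V.sub_mem (hinv f hf _) hf

theorem singleValues_le (hV : V ≤ homSubmodule R _ M) (hinv : IsAutInvariant V)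
    (x y : Fin g × Bool) : singleValues V x ≤ singleValues V y := by
  obtain ⟨i, c⟩ := x
  obtain ⟨j, d⟩ := y
  refine (singleValues_le_of_snd_eq hinv i j c).trans fun m hm => ?_
  obtain rfl | rfl := Bool.eq_or_eq_not c d
  · exact hm
  · simpa using apply_gen_mem_singleValues_not hV hinv hm j d

theorem apply_gen_mem_singleValues (hV : V ≤ homSubmodule R _ M) (hinv : IsAutInvariant V)
    (hf : f ∈ V) (x y : Fin g × Bool) : f (gen x) ∈ singleValues V y := by
  obtain ⟨i, c⟩ := x
  exact singleValues_le hV hinv (i, !c) y <| by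
    simpa using apply_gen_mem_singleValues_not hV hinv hf i !c

theorem exists_forall_mem_iff_apply_mem (hV : V ≤ homSubmodule R _ M) (hinv : IsAutInvariant V) :
    ∃ N : Submodule R M, ∀ f, f ∈ V ↔ f ∈ homSubmodule R _ M ∧ ∀ z, f z ∈ N := by
  refine ⟨⨅ x, singleValues V x, fun f => ⟨fun hf => ⟨hV hf, ?_⟩, fun ⟨hf, hval⟩ => ?_⟩⟩
  · exact apply_mem_of_apply_gen_mem (hV hf) fun x =>
      Submodule.mem_iInf _ |>.2 (apply_gen_mem_singleValues hV hinv hf x)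
  · rw [← sum_single_apply_gen hf]
    exact V.sum_mem fun x _ => (Submodule.mem_iInf _).1 (hval (gen x)) x

end InvariantSubmodules

end SurfaceGroup

theorem aut_invariant_subspace_of_homs_general {R M : Type*} [Ring R] [AddCommGroup M]
    [Module R M] [IsSimpleModule R M] (g : ℕ) (V : Submodule R (SurfaceGroup g → M))
    (hV : V ≤ homSubmodule R (SurfaceGroup g) M) (hinv : IsAutInvariant V) :
    V = ⊥ ∨ V = homSubmodule R (SurfaceGroup g) M := by
  obtain ⟨N, hN⟩ := SurfaceGroup.exists_forall_mem_iff_apply_mem hV hinv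
  refine (eq_bot_or_eq_top N).imp (fun hbot => ?_) (fun htop => ?_)
  · exact (Submodule.eq_bot_iff V).2 fun f hf => funext fun z => by
      simpa [hbot] using ((hN f).1 hf).2 z
  · ext f
    simp [hN, htop]

/-- If `V` is an `ℝ`-linear subspace of `Hom(Γ_g, ℝ)` (viewed as the subspace of real-valued
functions on `Γ_g` that are additive homomorphisms), closed under precomposition with every
group automorphism of `Γ_g`, then `V = {0}` or `V = Hom(Γ_g, ℝ)`. -/
theorem aut_invariant_subspace_of_homs (g : ℕ) (hg : 2 ≤ g)
    (V : Submodule ℝ (SurfaceGroup g → ℝ))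
    (hV : ∀ f ∈ V, ∀ x y : SurfaceGroup g, f (x * y) = f x + f y)
    (hinv : ∀ f ∈ V, ∀ φ : SurfaceGroup g ≃* SurfaceGroup g, (fun x => f (φ x)) ∈ V) :
    (V : Set (SurfaceGroup g → ℝ)) = {0} ∨
      (V : Set (SurfaceGroup g → ℝ)) =
        {f | ∀ x y : SurfaceGroup g, f (x * y) = f x + f y} :=
  (aut_invariant_subspace_of_homs_general g V hV hinv).imp (congrArg _) (congrArg SetLike.coe)
end

section
/- If f is a real-valued function defined on the set of pairwise distinct triples {(x,y,z) ∈ (S¹)³ : x, y, z pairwise distinct} that is locally constant and alternating (i.e., f(y,x,z) = −f(x,y,z) and f(x,z,y) = −f(x,y,z) for all pairwise distinct triples), then there exists a constant c ∈ ℝ such that f(x,y,z) = c·Or(x,y,z) for all pairwise distinct triples (x,y,z). (This is the concluding step in the proof of Theorem D: a continuous alternating function that is locally constant off the multidiagonal is a multiple of the orientation cocycle, hence of the Euler class.) -/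
/-- A triple `(x, y, z)` of points of the circle `ℝ/ℤ` is positively oriented if it admits
lifts `a < b < c < a + 1` in `ℝ`. -/
def PosOriented (x y z : UnitAddCircle) : Prop :=
  ∃ a b c : ℝ, (a : UnitAddCircle) = x ∧ (b : UnitAddCircle) = y ∧
    (c : UnitAddCircle) = z ∧ a < b ∧ b < c ∧ c < a + 1

open Classical in
/-- The orientation cocycle: `+1` on positively oriented triples, `-1` otherwise
(on pairwise distinct triples, "otherwise" means negatively oriented). -/
noncomputable def orientationCocycle (x y z : UnitAddCircle) : ℝ :=
  if PosOriented x y z then 1 else -1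

/-- The set of pairwise distinct triples of points of the circle. -/
def distinctTriples : Set (UnitAddCircle × UnitAddCircle × UnitAddCircle) :=
  {p | p.1 ≠ p.2.1 ∧ p.1 ≠ p.2.2 ∧ p.2.1 ≠ p.2.2}

/-!
The set of positively oriented triples is the image in `(ℝ/ℤ)³` of the convex set
`{a < b < c < a + 1} ⊆ ℝ³`, hence connected, so `f` takes a single value `c` on it. A pairwise
distinct triple that is not positively oriented becomes so after exchanging its last two entries,
which changes the sign of `f`.
-/

open Set

section AddCircle

variable {𝕜 : Type*} [AddCommGroup 𝕜] [LinearOrder 𝕜] [IsOrderedAddMonoid 𝕜] [Archimedean 𝕜]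
  {p : 𝕜} [Fact (0 < p)]

theorem addCircle_coe_image_Ioo (a : 𝕜) :
    ((↑) : 𝕜 → AddCircle p) '' Ioo a (a + p) = {(a : AddCircle p)}ᶜ := by
  have hbij : BijOn ((↑) : 𝕜 → AddCircle p) (Ico a (a + p)) univ :=
    ⟨mapsTo_univ _ _, fun _ hx _ hy ↦ (AddCircle.coe_eq_coe_iff_of_mem_Ico hx hy).1,
      (AddCircle.coe_image_Ico_eq p a).ge⟩
  have ha : a ∈ Ico a (a + p) := left_mem_Ico.2 (lt_add_of_pos_right a Fact.out)
  rw [← Ico_sdiff_left, (hbij.sdiff_singleton ha).image_eq, compl_eq_univ_sdiff]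

theorem addCircle_coe_ne_coe_of_mem_Ioo {a b : 𝕜} (hb : b ∈ Ioo a (a + p)) :
    (a : AddCircle p) ≠ b := by
  have hmem : (b : AddCircle p) ∈ ({(a : AddCircle p)}ᶜ : Set (AddCircle p)) :=
    addCircle_coe_image_Ioo (p := p) a ▸ mem_image_of_mem _ hb
  exact Ne.symm hmem

theorem addCircle_exists_mem_Ioo_coe_eq {a : 𝕜} {y : AddCircle p} (hy : (a : AddCircle p) ≠ y) :
    ∃ b ∈ Ioo a (a + p), (b : AddCircle p) = y := by
  rw [← mem_image, addCircle_coe_image_Ioo]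
  exact hy.symm

end AddCircle

theorem exists_forall_eq_of_isLocallyConstant_of_isConnected {X Y : Type*} [TopologicalSpace X]
    {s t : Set X} {f : X → Y} (hf : IsLocallyConstant (t.domRestrict f)) (hs : IsConnected s)
    (hst : s ⊆ t) : ∃ c, ∀ x ∈ s, f x = c := by
  obtain ⟨x₀, hx₀⟩ := hs.nonempty
  have hs' : IsPreconnected (Subtype.val ⁻¹' s : Set t) := by
    rw [← Topology.IsInducing.subtypeVal.isPreconnected_image, Subtype.image_preimage_coe,
      inter_eq_self_of_subset_right hst]
    exact hs.isPreconnected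
  exact ⟨f x₀, fun x hx ↦ hf.apply_eq_of_isPreconnected hs' (x := ⟨x, hst hx⟩)
    (y := ⟨x₀, hst hx₀⟩) hx hx₀⟩

/-- The lifts to `ℝ³` of positively oriented triples that witness `PosOriented`: increasing triples
spanning less than one period. -/
def increasingLifts : Set (ℝ × ℝ × ℝ) :=
  {t | t.1 < t.2.1 ∧ t.2.1 < t.2.2 ∧ t.2.2 < t.1 + 1}

/-- The set of positively oriented triples of points of the circle. -/
def positiveTriples : Set (UnitAddCircle × UnitAddCircle × UnitAddCircle) :=
  {q | PosOriented q.1 q.2.1 q.2.2}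

theorem convex_increasingLifts : Convex ℝ increasingLifts := by
  have h₁₂ : Convex ℝ {t : ℝ × ℝ × ℝ | t.1 - t.2.1 < 0} :=
    convex_halfSpace_lt (LinearMap.fst ℝ ℝ (ℝ × ℝ) -
      LinearMap.fst ℝ ℝ ℝ ∘ₗ LinearMap.snd ℝ ℝ (ℝ × ℝ)).isLinear 0
  have h₂₃ : Convex ℝ {t : ℝ × ℝ × ℝ | t.2.1 - t.2.2 < 0} :=
    convex_halfSpace_lt ((LinearMap.fst ℝ ℝ ℝ - LinearMap.snd ℝ ℝ ℝ) ∘ₗ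
      LinearMap.snd ℝ ℝ (ℝ × ℝ)).isLinear 0
  have h₃₁ : Convex ℝ {t : ℝ × ℝ × ℝ | t.2.2 - t.1 < 1} :=
    convex_halfSpace_lt (LinearMap.snd ℝ ℝ ℝ ∘ₗ LinearMap.snd ℝ ℝ (ℝ × ℝ) -
      LinearMap.fst ℝ ℝ (ℝ × ℝ)).isLinear 1
  convert! h₁₂.inter (h₂₃.inter h₃₁) using 1
  ext t
  simp only [increasingLifts, mem_ofPred_eq, mem_inter_iff, sub_lt_iff_lt_add', add_zero]

theorem image_increasingLifts :
    Prod.map (↑) (Prod.map (↑) (↑)) '' increasingLifts = positiveTriples := by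
  ext ⟨x, y, z⟩
  constructor
  · rintro ⟨⟨a, b, c⟩, ⟨hab, hbc, hca⟩, h⟩
    obtain ⟨rfl, rfl, rfl⟩ := by simpa only [Prod.map_apply, Prod.mk.injEq] using h
    exact ⟨a, b, c, rfl, rfl, rfl, hab, hbc, hca⟩
  · rintro ⟨a, b, c, rfl, rfl, rfl, hab, hbc, hca⟩
    exact ⟨(a, b, c), ⟨hab, hbc, hca⟩, rfl⟩

theorem isConnected_positiveTriples : IsConnected positiveTriples := by
  have hne : increasingLifts.Nonempty := ⟨(0, 1 / 3, 2 / 3), by norm_num [increasingLifts]⟩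
  have hcoe : Continuous ((↑) : ℝ → UnitAddCircle) := AddCircle.continuous_mk' 1
  rw [← image_increasingLifts]
  exact (convex_increasingLifts.isConnected hne).image _
    (hcoe.prodMap (hcoe.prodMap hcoe)).continuousOn

theorem positiveTriples_subset_distinctTriples : positiveTriples ⊆ distinctTriples := by
  rintro ⟨_, _, _⟩ ⟨a, b, c, rfl, rfl, rfl, hab, hbc, hca⟩
  exact ⟨addCircle_coe_ne_coe_of_mem_Ioo ⟨hab, hbc.trans hca⟩,
    addCircle_coe_ne_coe_of_mem_Ioo ⟨hab.trans hbc, hca⟩,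
    addCircle_coe_ne_coe_of_mem_Ioo ⟨hbc, hca.trans (by gcongr)⟩⟩

theorem posOriented_or_posOriented_swap {x y z : UnitAddCircle}
    (hxy : x ≠ y) (hxz : x ≠ z) (hyz : y ≠ z) : PosOriented x y z ∨ PosOriented x z y := by
  obtain ⟨a, rfl⟩ := QuotientAddGroup.mk_surjective x
  obtain ⟨b, ⟨hab, hba⟩, rfl⟩ := addCircle_exists_mem_Ioo_coe_eq hxy
  obtain ⟨c, ⟨hac, hca⟩, rfl⟩ := addCircle_exists_mem_Ioo_coe_eq hxz
  have hbc : b ≠ c := fun h ↦ hyz (congrArg _ h)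
  rcases hbc.lt_or_gt with hbc | hcb
  · exact .inl ⟨a, b, c, rfl, rfl, rfl, hab, hbc, hca⟩
  · exact .inr ⟨a, c, b, rfl, rfl, rfl, hac, hcb, hba⟩

theorem locallyConstant_alternating_eq_const_mul_orientation_general
    {E : Type*} [AddCommGroup E] [Module ℝ E]
    (f : UnitAddCircle → UnitAddCircle → UnitAddCircle → E)
    (hlc : IsLocallyConstant (fun p : ↥distinctTriples => f p.1.1 p.1.2.1 p.1.2.2))
    (halt : ∀ x y z : UnitAddCircle, x ≠ y → x ≠ z → y ≠ z → f x z y = -f x y z) :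
    ∃ c : E, ∀ x y z : UnitAddCircle, x ≠ y → x ≠ z → y ≠ z →
      f x y z = orientationCocycle x y z • c := by
  obtain ⟨c, hc⟩ : ∃ c, ∀ q ∈ positiveTriples, f q.1 q.2.1 q.2.2 = c :=
    exists_forall_eq_of_isLocallyConstant_of_isConnected hlc isConnected_positiveTriples
      positiveTriples_subset_distinctTriples
  refine ⟨c, fun x y z hxy hxz hyz ↦ ?_⟩
  by_cases hpos : PosOriented x y z
  · rw [orientationCocycle, if_pos hpos, one_smul]
    exact hc (x, y, z) hpos
  · have hswap : PosOriented x z y :=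
      (posOriented_or_posOriented_swap hxy hxz hyz).resolve_left hpos
    rw [orientationCocycle, if_neg hpos, neg_one_smul, ← hc (x, z, y) hswap,
      halt x y z hxy hxz hyz, neg_neg]

/-- A locally constant alternating real function on the set of pairwise distinct triples of
points of the circle is a constant multiple of the orientation cocycle. -/
theorem locallyConstant_alternating_eq_const_mul_orientation
    (f : UnitAddCircle → UnitAddCircle → UnitAddCircle → ℝ)
    (hlc : IsLocallyConstant (fun p : ↥distinctTriples => f p.1.1 p.1.2.1 p.1.2.2))
    (halt₁ : ∀ x y z : UnitAddCircle, x ≠ y → x ≠ z → y ≠ z → f y x z = - f x y z)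
    (halt₂ : ∀ x y z : UnitAddCircle, x ≠ y → x ≠ z → y ≠ z → f x z y = - f x y z) :
    ∃ c : ℝ, ∀ x y z : UnitAddCircle, x ≠ y → x ≠ z → y ≠ z →
      f x y z = c * orientationCocycle x y z := by
  simpa only [smul_eq_mul, mul_comm] using
    locallyConstant_alternating_eq_const_mul_orientation_general f hlc halt₂
end

section
/- Let X be a topological space and h : X → X a homeomorphism. Let V be a finite-dimensional linear subspace of the space of bounded continuous real-valued functions on X such that f ∘ h ∈ V for every f ∈ V. If a ∈ X is a fixed point of h (h(a) = a) and x ∈ X is a point whose iterates hⁿ(x) converge to a as n → +∞, then f(x) = f(a) for every f ∈ V. (This is the dynamical core of Lemma 3.3: since precomposition with h is a sup-norm-preserving bijection of V, the coordinates of f ∘ h^{−n} in a fixed basis of V remain bounded, and continuity of the basis elements at a forces f(x) = f(a).) -/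
open Filter Topology

/-!
Precomposition with `h` is an isometry for the supremum norm, and an isometry returns arbitrarily
close to its starting point along any totally bounded orbit, in particular along any bounded orbit
in a finite-dimensional space. Hence `f` is a uniform cluster point of the functions `f ∘ hⁿ`, so
`f x` is a cluster point of the sequence `f (hⁿ x)`, which converges to `f a`.
-/

open scoped BoundedContinuousFunction

theorem isometry_iterate {α : Type*} [PseudoEMetricSpace α] {T : α → α} (hT : Isometry T) :
    ∀ n : ℕ, Isometry T^[n]
  | 0 => isometry_id
  | n + 1 => (isometry_iterate hT n).comp hT

theorem mapClusterPt_iterate_of_isometry {α : Type*} [PseudoEMetricSpace α] {T : α → α}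
    (hT : Isometry T) {p : α} (hp : TotallyBounded (Set.range fun n : ℕ => T^[n] p)) :
    MapClusterPt p atTop fun n : ℕ => T^[n] p := by
  refine Metric.nhds_basis_eball.mapClusterPt_iff_frequently.2 fun ε hε =>
    frequently_atTop.2 fun N => ?_
  let u : Ultrafilter ℕ := Ultrafilter.of atTop
  have cauchy_orbit : Cauchy (map (fun n : ℕ => T^[n] p) u) :=
    totallyBounded_iff_ultrafilter.1 hp (u.map _) (le_principal_iff.2 range_mem_map)
  obtain ⟨t, ht, edist_lt⟩ := (EMetric.cauchy_iff.1 cauchy_orbit).2 ε hε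
  have mem_t : ∀ᶠ n : ℕ in u, T^[n] p ∈ t := ht
  obtain ⟨m, hm⟩ := mem_t.exists
  obtain ⟨n, hn, hmn⟩ :=
    (mem_t.and (Ultrafilter.of_le atTop (eventually_ge_atTop (N + m)))).exists
  refine ⟨n - m, Nat.le_sub_of_add_le hmn, ?_⟩
  calc edist (T^[n - m] p) p
      = edist (T^[m] (T^[n - m] p)) (T^[m] p) := ((isometry_iterate hT m).edist_eq _ _).symm
    _ = edist (T^[n] p) (T^[m] p) := by
        rw [← Function.iterate_add_apply, Nat.add_sub_cancel' (le_of_add_le_right hmn)]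
    _ < ε := edist_lt _ hn _ hm

theorem totallyBounded_of_isBounded_of_subset_submodule {𝕜 E : Type*} [NontriviallyNormedField 𝕜]
    [LocallyCompactSpace 𝕜] [NormedAddCommGroup E] [NormedSpace 𝕜 E] (V : Submodule 𝕜 E)
    [FiniteDimensional 𝕜 V] {s : Set E} (hs : Bornology.IsBounded s) (hsV : s ⊆ V) :
    TotallyBounded s := by
  have : ProperSpace V := FiniteDimensional.proper 𝕜 V
  have preimage_bounded : Bornology.IsBounded ((↑) ⁻¹' s : Set V) :=
    isometry_subtype_coe.antilipschitz.isBounded_preimage hs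
  have preimage_totallyBounded : TotallyBounded ((↑) ⁻¹' s : Set V) :=
    preimage_bounded.isCompact_closure.totallyBounded.subset subset_closure
  have image_preimage : Subtype.val '' ((↑) ⁻¹' s : Set V) = s :=
    Set.image_preimage_eq_of_subset (by simpa using hsV)
  rw [← image_preimage]
  exact preimage_totallyBounded.image uniformContinuous_subtype_val

section Precomposition

variable {X E : Type*} [TopologicalSpace X]

theorem isometry_compContinuous_of_denseRange {Y : Type*} [TopologicalSpace Y]
    [PseudoMetricSpace E] {h : C(Y, X)} (hh : DenseRange h) :
    Isometry fun f : X →ᵇ E => f.compContinuous h := by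
  refine Isometry.of_dist_eq fun f g => le_antisymm ?_ ?_
  · simpa using (BoundedContinuousFunction.lipschitz_compContinuous h).dist_le_mul f g
  · refine (BoundedContinuousFunction.dist_le dist_nonneg).2 fun x => ?_
    refine isClosed_property hh (isClosed_le (f.continuous.dist g.continuous) continuous_const)
      (fun y => ?_) x
    exact (f.compContinuous h).dist_coe_le_dist (g := g.compContinuous h) y

theorem iterate_compContinuous_apply [PseudoMetricSpace E] (h : C(X, X)) (f : X →ᵇ E) (n : ℕ)
    (x : X) : ((fun g : X →ᵇ E => g.compContinuous h)^[n] f) x = f (h^[n] x) := by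
  induction n generalizing x with
  | zero => rfl
  | succ n ih =>
    rw [Function.iterate_succ_apply', Function.iterate_succ_apply]
    exact ih (h x)

theorem totallyBounded_range_iterate_compContinuous {𝕜 : Type*} [NontriviallyNormedField 𝕜]
    [LocallyCompactSpace 𝕜] [NormedAddCommGroup E] [NormedSpace 𝕜 E] {h : C(X, X)}
    (V : Submodule 𝕜 (X →ᵇ E)) [FiniteDimensional 𝕜 V]
    (hV : ∀ f ∈ V, f.compContinuous h ∈ V) {f : X →ᵇ E} (hf : f ∈ V) :
    TotallyBounded (Set.range fun n : ℕ => (fun g : X →ᵇ E => g.compContinuous h)^[n] f) := by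
  refine totallyBounded_of_isBounded_of_subset_submodule V
    (isBounded_iff_forall_norm_le.2 ⟨‖f‖, ?_⟩) ?_
  · rintro _ ⟨n, rfl⟩
    refine (BoundedContinuousFunction.norm_le (norm_nonneg f)).2 fun x => ?_
    rw [iterate_compContinuous_apply]
    exact f.norm_coe_le_norm _
  · rintro _ ⟨n, rfl⟩
    exact Set.MapsTo.iterate (s := (V : Set (X →ᵇ E))) hV n hf

theorem eq_at_attracting_fixed_point_general [MetricSpace E] {h : C(X, X)} (hh : DenseRange h)
    {f : X →ᵇ E}
    (hf : TotallyBounded (Set.range fun n : ℕ => (fun g : X →ᵇ E => g.compContinuous h)^[n] f))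
    {a x : X} (hx : Tendsto (fun n : ℕ => h^[n] x) atTop (𝓝 a)) : f x = f a := by
  have recurrent : MapClusterPt f atTop
      fun n : ℕ => (fun g : X →ᵇ E => g.compContinuous h)^[n] f :=
    mapClusterPt_iterate_of_isometry (isometry_compContinuous_of_denseRange hh) hf
  have recurrent_at : MapClusterPt (f x) atTop fun n : ℕ => f (h^[n] x) := by
    simpa only [Function.comp_def, iterate_compContinuous_apply] using
      recurrent.continuousAt_comp (continuous_eval_const x).continuousAt
  have attracted : Tendsto (fun n : ℕ => f (h^[n] x)) atTop (𝓝 (f a)) :=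
    (f.continuous.tendsto a).comp hx
  exact eq_of_nhds_neBot (recurrent_at.clusterPt.mono attracted)

end Precomposition

/-- Let `h` be a homeomorphism of a topological space `X` and `V` a finite-dimensional
subspace of the space of bounded continuous real functions on `X` closed under
precomposition with `h`. If `a` is a fixed point of `h` and the iterates `hⁿ(x)` converge
to `a`, then `f x = f a` for every `f ∈ V`. -/
theorem eq_at_attracting_fixed_point {X : Type*} [TopologicalSpace X] (h : X ≃ₜ X)
    (V : Submodule ℝ (BoundedContinuousFunction X ℝ))
    (hfd : FiniteDimensional ℝ V)
    (hinv : ∀ f ∈ V, f.compContinuous (h : C(X, X)) ∈ V)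
    (a : X) (ha : h a = a) (x : X)
    (hx : Tendsto (fun n : ℕ => (⇑h)^[n] x) atTop (𝓝 a)) :
    ∀ f ∈ V, f x = f a := by
  intro f hf
  exact eq_at_attracting_fixed_point_general (h := (h : C(X, X))) h.surjective.denseRange
    (totallyBounded_range_iterate_compContinuous V hinv hf) hx
end

section
/- Let Γ be a group, X a compact metrizable topological space with a Borel probability measure μ, and let ρ₁, ρ₂ be two actions of Γ on X by homeomorphisms. Let h : X → X be a homeomorphism satisfying h(ρ₁(γ)(x)) = ρ₂(γ)(h(x)) for all γ ∈ Γ and x ∈ X. Let f : X³ → ℝ be bounded and measurable, invariant under the diagonal ρ₁-action (f(ρ₁(γ)x₀, ρ₁(γ)x₁, ρ₁(γ)x₂) = f(x₀,x₁,x₂) for all γ and all xᵢ), and a cocycle. Define g : X³ → ℝ by g(y₀,y₁,y₂) = f(h⁻¹(y₀), h⁻¹(y₁), h⁻¹(y₂)). Then: (i) g is bounded, measurable, invariant under the diagonal ρ₂-action, and a cocycle; and (ii) there exists a bounded function β : Γ² → ℝ with β(γγ₀, γγ₁) = β(γ₀,γ₁) for all γ, γ₀, γ₁ ∈ Γ such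 that ψ_{ρ₁}(f)(γ₀,γ₁,γ₂) − ψ_{ρ₂}(g)(γ₀,γ₁,γ₂) = δβ(γ₀,γ₁,γ₂) for all γ₀,γ₁,γ₂ ∈ Γ. (This is the content of Lemma 2.1: the subspace CH²_b(Γ) of H²_b(Γ) is independent of the chosen hyperbolic metric, since the push-forward of an invariant cocycle under the equivariant boundary homeomorphism yields a cohomologous bounded cochain.) -/
open MeasureTheory

/-- The averaging map `ψ_ρ` sending a bounded measurable function on `X³` to a cochain on
`Γ³`: `ψ_ρ(f)(γ₀,γ₁,γ₂) = ∫_{X³} f(ρ(γ₀)x₀, ρ(γ₁)x₁, ρ(γ₂)x₂) dμ³`. -/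
noncomputable def psi {Γ X : Type*} [MeasurableSpace X] (μ : Measure X)
    (ρ : Γ → X → X) (f : X → X → X → ℝ) (γ₀ γ₁ γ₂ : Γ) : ℝ :=
  ∫ p : X × X × X, f (ρ γ₀ p.1) (ρ γ₁ p.2.1) (ρ γ₂ p.2.2) ∂(μ.prod (μ.prod μ))

/-! Since `h⁻¹` intertwines the actions, `ψ_{ρ₁}(f)` and `ψ_{ρ₂}(g)` both average `f` over triangles
in `X`, with vertices `ρ₁(γᵢ) xᵢ` and `ρ₁(γᵢ) h⁻¹(yᵢ)` respectively. Such a pair of triangles bounds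
a prism, and the cocycle identity on three tetrahedra filling it writes the difference of the two
values of `f` as an alternating sum over the three lateral squares. The square over an edge `ij`
involves only `γᵢ` and `γⱼ`, so averaging turns this sum into the coboundary of a function `β` on
`Γ²`, bounded because `f` is, and invariant because `f` is. -/

section Prism

variable {X A : Type*} [AddCommGroup A]

/-- Homogeneous 2-cocycles on a set `X`, with the cocycle identity imposed at every quadruple
of points, not just almost everywhere. -/
def IsCocycle (f : X → X → X → A) : Prop :=
  ∀ x₀ x₁ x₂ x₃, f x₁ x₂ x₃ - f x₀ x₂ x₃ + f x₀ x₁ x₃ - f x₀ x₁ x₂ = 0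

theorem IsCocycle.comp {Y : Type*} {f : X → X → X → A} (hf : IsCocycle f) (φ : Y → X) :
    IsCocycle fun y₀ y₁ y₂ => f (φ y₀) (φ y₁) (φ y₂) :=
  fun y₀ y₁ y₂ y₃ => hf (φ y₀) (φ y₁) (φ y₂) (φ y₃)

/-- The prism operator: the alternating sum of `f` over the two triangles `(x₀, x₁, y₁)` and
`(x₀, y₀, y₁)` that subdivide the square with top edge `(x₀, x₁)` and bottom edge `(y₀, y₁)`. -/
def prism (f : X → X → X → A) (x₀ y₀ x₁ y₁ : X) : A :=
  f x₀ x₁ y₁ - f x₀ y₀ y₁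

theorem IsCocycle.sub_eq_coboundary_prism {f : X → X → X → A} (hf : IsCocycle f)
    (x₀ y₀ x₁ y₁ x₂ y₂ : X) :
    f x₀ x₁ x₂ - f y₀ y₁ y₂ =
      prism f x₁ y₁ x₂ y₂ - prism f x₀ y₀ x₂ y₂ + prism f x₀ y₀ x₁ y₁ := by
  unfold prism
  -- The three tetrahedra into which the prism over a triangle decomposes.
  linear_combination (norm := module)
    -hf x₀ y₀ y₁ y₂ + hf x₀ x₁ y₁ y₂ - hf x₀ x₁ x₂ y₂

end Prism

theorem norm_prism_le {X E : Type*} [SeminormedAddCommGroup E] {f : X → X → X → E} {C : ℝ}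
    (hC : ∀ x y z, ‖f x y z‖ ≤ C) (x₀ y₀ x₁ y₁ : X) : ‖prism f x₀ y₀ x₁ y₁‖ ≤ C + C :=
  norm_sub_le_of_le (hC _ _ _) (hC _ _ _)

section Integral

variable {E : Type*} [NormedAddCommGroup E]

theorem integrable_comp_of_norm_le {Ω X : Type*} [MeasurableSpace Ω] [MeasurableSpace X]
    {P : Measure Ω} [IsFiniteMeasure P] {f : X → X → X → E} {C : ℝ}
    (hC : ∀ x y z, ‖f x y z‖ ≤ C)
    (hf : StronglyMeasurable fun p : X × X × X => f p.1 p.2.1 p.2.2)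
    {u v w : Ω → X} (hu : Measurable u) (hv : Measurable v) (hw : Measurable w) :
    Integrable (fun ω => f (u ω) (v ω) (w ω)) P :=
  .of_bound (hf.comp_measurable (hu.prodMk (hv.prodMk hw))).aestronglyMeasurable C
    (.of_forall fun _ => hC _ _ _)

theorem integrable_prod_comp_of_norm_le {Ω₀ Ω₁ Ω₂ X : Type*} [MeasurableSpace Ω₀]
    [MeasurableSpace Ω₁] [MeasurableSpace Ω₂] [MeasurableSpace X] {P₀ : Measure Ω₀}
    {P₁ : Measure Ω₁} {P₂ : Measure Ω₂} [IsFiniteMeasure P₀] [IsFiniteMeasure P₁]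
    [IsFiniteMeasure P₂] {f : X → X → X → E} {C : ℝ} (hC : ∀ x y z, ‖f x y z‖ ≤ C)
    (hf : StronglyMeasurable fun p : X × X × X => f p.1 p.2.1 p.2.2) {u : Ω₀ → X} {v : Ω₁ → X}
    {w : Ω₂ → X} (hu : Measurable u) (hv : Measurable v) (hw : Measurable w) :
    Integrable (fun p : Ω₀ × Ω₁ × Ω₂ => f (u p.1) (v p.2.1) (w p.2.2))
      (P₀.prod (P₁.prod P₂)) :=
  integrable_comp_of_norm_le hC hf (hu.comp measurable_fst) (hv.comp measurable_snd.fst)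
    (hw.comp measurable_snd.snd)

variable [NormedSpace ℝ E]

theorem integral_coboundary {Ω₀ Ω₁ Ω₂ : Type*} [MeasurableSpace Ω₀] [MeasurableSpace Ω₁]
    [MeasurableSpace Ω₂] {P₀ : Measure Ω₀} {P₁ : Measure Ω₁} {P₂ : Measure Ω₂}
    [IsProbabilityMeasure P₀] [IsProbabilityMeasure P₁] [IsProbabilityMeasure P₂]
    {c₁₂ : Ω₁ × Ω₂ → E} {c₀₂ : Ω₀ × Ω₂ → E} {c₀₁ : Ω₀ × Ω₁ → E}
    (h₁₂ : Integrable c₁₂ (P₁.prod P₂)) (h₀₂ : Integrable c₀₂ (P₀.prod P₂))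
    (h₀₁ : Integrable c₀₁ (P₀.prod P₁)) :
    ∫ p, (c₁₂ p.2 - c₀₂ (p.1, p.2.2) + c₀₁ (p.1, p.2.1)) ∂(P₀.prod (P₁.prod P₂)) =
      ∫ q, c₁₂ q ∂(P₁.prod P₂) - ∫ q, c₀₂ q ∂(P₀.prod P₂) + ∫ q, c₀₁ q ∂(P₀.prod P₁) := by
  have π₁₂ : MeasurePreserving Prod.snd (P₀.prod (P₁.prod P₂)) (P₁.prod P₂) :=
    measurePreserving_snd
  have π₀₂ : MeasurePreserving (Prod.map id Prod.snd) (P₀.prod (P₁.prod P₂)) (P₀.prod P₂) :=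
    (MeasurePreserving.id P₀).prod measurePreserving_snd
  have π₀₁ : MeasurePreserving (Prod.map id Prod.fst) (P₀.prod (P₁.prod P₂)) (P₀.prod P₁) :=
    (MeasurePreserving.id P₀).prod measurePreserving_fst
  rw [← π₁₂.hasLaw.integral_comp h₁₂.1, ← π₀₂.hasLaw.integral_comp h₀₂.1,
    ← π₀₁.hasLaw.integral_comp h₀₁.1]
  have i₁₂ := π₁₂.integrable_comp_of_integrable h₁₂
  have i₀₂ := π₀₂.integrable_comp_of_integrable h₀₂
  have i₀₁ := π₀₁.integrable_comp_of_integrable h₀₁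
  exact (integral_add (i₁₂.sub i₀₂) i₀₁).trans (congrArg (· + _) (integral_sub i₁₂ i₀₂))

end Integral

section AveragedPrism

variable {Γ Ω X E : Type*} [MeasurableSpace Ω] [NormedAddCommGroup E] [NormedSpace ℝ E]

/-- The average of `prism f` over two independent points of `Ω`, whose images under
`a, b : Γ → Ω → X` supply the top and bottom edges. It is the cochain on `Γ²` whose coboundary
compares the averages of `f` along `a` and along `b`. -/
noncomputable def averagedPrism (P : Measure Ω) (a b : Γ → Ω → X) (f : X → X → X → E)
    (γ₀ γ₁ : Γ) : E :=
  ∫ q : Ω × Ω, prism f (a γ₀ q.1) (b γ₀ q.1) (a γ₁ q.2) (b γ₁ q.2) ∂(P.prod P)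

variable {P : Measure Ω} {a b : Γ → Ω → X} {f : X → X → X → E}

theorem averagedPrism_mul_left [Mul Γ] {ρ : Γ → X → X}
    (ha : ∀ γ γ' ω, a (γ * γ') ω = ρ γ (a γ' ω)) (hb : ∀ γ γ' ω, b (γ * γ') ω = ρ γ (b γ' ω))
    (hinv : ∀ γ x y z, f (ρ γ x) (ρ γ y) (ρ γ z) = f x y z) (γ γ₀ γ₁ : Γ) :
    averagedPrism P a b f (γ * γ₀) (γ * γ₁) = averagedPrism P a b f γ₀ γ₁ := by
  simp only [averagedPrism, prism, ha, hb, hinv]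

variable [IsProbabilityMeasure P]

theorem norm_averagedPrism_le {C : ℝ} (hC : ∀ x y z, ‖f x y z‖ ≤ C) (γ₀ γ₁ : Γ) :
    ‖averagedPrism P a b f γ₀ γ₁‖ ≤ C + C := by
  simpa [averagedPrism] using norm_integral_le_of_norm_le_const (μ := P.prod P)
    (.of_forall fun q => norm_prism_le hC (a γ₀ q.1) (b γ₀ q.1) (a γ₁ q.2) (b γ₁ q.2))

theorem IsCocycle.integral_sub_integral_eq_coboundary [MeasurableSpace X] (hf : IsCocycle f)
    {C : ℝ} (hC : ∀ x y z, ‖f x y z‖ ≤ C)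
    (hmeas : StronglyMeasurable fun p : X × X × X => f p.1 p.2.1 p.2.2)
    (ha : ∀ γ, Measurable (a γ)) (hb : ∀ γ, Measurable (b γ)) (γ₀ γ₁ γ₂ : Γ) :
    ∫ p : Ω × Ω × Ω, f (a γ₀ p.1) (a γ₁ p.2.1) (a γ₂ p.2.2) ∂(P.prod (P.prod P)) -
        ∫ p : Ω × Ω × Ω, f (b γ₀ p.1) (b γ₁ p.2.1) (b γ₂ p.2.2) ∂(P.prod (P.prod P)) =
      averagedPrism P a b f γ₁ γ₂ - averagedPrism P a b f γ₀ γ₂ +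
        averagedPrism P a b f γ₀ γ₁ := by
  have integrable_prism (γ γ' : Γ) : Integrable
      (fun q : Ω × Ω => prism f (a γ q.1) (b γ q.1) (a γ' q.2) (b γ' q.2)) (P.prod P) :=
    (integrable_comp_of_norm_le hC hmeas ((ha γ).comp measurable_fst)
        ((ha γ').comp measurable_snd) ((hb γ').comp measurable_snd)).sub
      (integrable_comp_of_norm_le hC hmeas ((ha γ).comp measurable_fst)
        ((hb γ).comp measurable_fst) ((hb γ').comp measurable_snd))
  rw [← integral_sub (integrable_prod_comp_of_norm_le hC hmeas (ha γ₀) (ha γ₁) (ha γ₂))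
    (integrable_prod_comp_of_norm_le hC hmeas (hb γ₀) (hb γ₁) (hb γ₂))]
  simp only [hf.sub_eq_coboundary_prism]
  exact integral_coboundary (integrable_prism γ₁ γ₂) (integrable_prism γ₀ γ₂)
    (integrable_prism γ₀ γ₁)

end AveragedPrism

theorem psi_eq_integral_of_measurePreserving {Γ Ω X : Type*} [MeasurableSpace Ω]
    [MeasurableSpace X] {P : Measure Ω} [SFinite P] {μ : Measure X} {π : Ω → X}
    (hπ : MeasurePreserving π P μ) {ρ : Γ → X → X} {f : X → X → X → ℝ} {γ₀ γ₁ γ₂ : Γ}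
    (hf : AEStronglyMeasurable
      (fun p : X × X × X => f (ρ γ₀ p.1) (ρ γ₁ p.2.1) (ρ γ₂ p.2.2)) (μ.prod (μ.prod μ))) :
    psi μ ρ f γ₀ γ₁ γ₂ =
      ∫ p : Ω × Ω × Ω, f (ρ γ₀ (π p.1)) (ρ γ₁ (π p.2.1)) (ρ γ₂ (π p.2.2))
        ∂(P.prod (P.prod P)) :=
  ((hπ.prod (hπ.prod hπ)).hasLaw.integral_comp hf).symm

section Semiconjugacy

variable {Γ X Y : Type*} [MeasurableSpace X] [MeasurableSpace Y]
  {ρ : Γ → X → X} {σ : Γ → Y → Y} {φ : Y → X} {f : X → X → X → ℝ}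

theorem IsCocycle.psi_sub_psi_comp_eq_coboundary (hf : IsCocycle f)
    (μ : Measure X) (ν : Measure Y) [IsProbabilityMeasure μ] [IsProbabilityMeasure ν]
    {C : ℝ} (hC : ∀ x y z, |f x y z| ≤ C)
    (hmeas : Measurable fun p : X × X × X => f p.1 p.2.1 p.2.2)
    (hρ : ∀ γ, Measurable (ρ γ)) (hφ : Measurable φ) (hsemi : ∀ γ y, φ (σ γ y) = ρ γ (φ y))
    (γ₀ γ₁ γ₂ : Γ) :
    let β := averagedPrism (μ.prod ν) (fun γ z => ρ γ z.1) (fun γ z => ρ γ (φ z.2)) f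
    psi μ ρ f γ₀ γ₁ γ₂ - psi ν σ (fun y₀ y₁ y₂ => f (φ y₀) (φ y₁) (φ y₂)) γ₀ γ₁ γ₂ =
      β γ₁ γ₂ - β γ₀ γ₂ + β γ₀ γ₁ := by
  intro β
  have hφρ (γ : Γ) : Measurable fun y => ρ γ (φ y) := (hρ γ).comp hφ
  have psi_μ : psi μ ρ f γ₀ γ₁ γ₂ =
      ∫ p, f (ρ γ₀ p.1.1) (ρ γ₁ p.2.1.1) (ρ γ₂ p.2.2.1)
        ∂((μ.prod ν).prod ((μ.prod ν).prod (μ.prod ν))) :=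
    psi_eq_integral_of_measurePreserving measurePreserving_fst
      (integrable_prod_comp_of_norm_le hC hmeas.stronglyMeasurable
        (hρ γ₀) (hρ γ₁) (hρ γ₂)).aestronglyMeasurable
  have psi_ν : psi ν σ (fun y₀ y₁ y₂ => f (φ y₀) (φ y₁) (φ y₂)) γ₀ γ₁ γ₂ =
      ∫ p, f (ρ γ₀ (φ p.1.2)) (ρ γ₁ (φ p.2.1.2)) (ρ γ₂ (φ p.2.2.2))
        ∂((μ.prod ν).prod ((μ.prod ν).prod (μ.prod ν))) := by
    simp only [← hsemi] at hφρ ⊢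
    exact psi_eq_integral_of_measurePreserving measurePreserving_snd
      (integrable_prod_comp_of_norm_le hC hmeas.stronglyMeasurable
        (hφρ γ₀) (hφρ γ₁) (hφρ γ₂)).aestronglyMeasurable
  rw [psi_μ, psi_ν]
  exact hf.integral_sub_integral_eq_coboundary hC hmeas.stronglyMeasurable
    (fun γ => (hρ γ).comp measurable_fst) (fun γ => (hφρ γ).comp measurable_snd) γ₀ γ₁ γ₂

theorem pushforward_cocycle_cohomologous_general [Mul Γ]
    (μ : Measure X) (ν : Measure Y) [IsProbabilityMeasure μ] [IsProbabilityMeasure ν]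
    (hρmul : ∀ γ γ' x, ρ (γ * γ') x = ρ γ (ρ γ' x)) (hρ : ∀ γ, Measurable (ρ γ))
    (hφ : Measurable φ) (hsemi : ∀ γ y, φ (σ γ y) = ρ γ (φ y))
    (hbdd : ∃ C, ∀ x y z, |f x y z| ≤ C)
    (hmeas : Measurable fun p : X × X × X => f p.1 p.2.1 p.2.2)
    (hinv : ∀ γ x y z, f (ρ γ x) (ρ γ y) (ρ γ z) = f x y z) (hcoc : IsCocycle f)
    {g : Y → Y → Y → ℝ} (hg : ∀ y₀ y₁ y₂, g y₀ y₁ y₂ = f (φ y₀) (φ y₁) (φ y₂)) :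
    (∃ C, ∀ x y z, |g x y z| ≤ C) ∧
    (Measurable fun p : Y × Y × Y => g p.1 p.2.1 p.2.2) ∧
    (∀ γ x y z, g (σ γ x) (σ γ y) (σ γ z) = g x y z) ∧
    IsCocycle g ∧
    ∃ β : Γ → Γ → ℝ,
      (∃ C, ∀ γ₀ γ₁, |β γ₀ γ₁| ≤ C) ∧
      (∀ γ γ₀ γ₁, β (γ * γ₀) (γ * γ₁) = β γ₀ γ₁) ∧
      (∀ γ₀ γ₁ γ₂, psi μ ρ f γ₀ γ₁ γ₂ - psi ν σ g γ₀ γ₁ γ₂ =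
        β γ₁ γ₂ - β γ₀ γ₂ + β γ₀ γ₁) := by
  obtain rfl : g = fun y₀ y₁ y₂ => f (φ y₀) (φ y₁) (φ y₂) :=
    funext fun y₀ => funext₂ (hg y₀)
  obtain ⟨C, hC : ∀ x y z, ‖f x y z‖ ≤ C⟩ := hbdd
  refine ⟨⟨C, fun x y z => hC (φ x) (φ y) (φ z)⟩, ?measurable, ?invariant, hcoc.comp φ,
    averagedPrism (μ.prod ν) (fun γ z => ρ γ z.1) (fun γ z => ρ γ (φ z.2)) f,
    ⟨C + C, norm_averagedPrism_le hC⟩,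
    averagedPrism_mul_left (fun γ γ' z => hρmul γ γ' z.1) (fun γ γ' z => hρmul γ γ' (φ z.2)) hinv,
    hcoc.psi_sub_psi_comp_eq_coboundary μ ν hC hmeas hρ hφ hsemi⟩
  case measurable => exact hmeas.comp (hφ.prodMap (hφ.prodMap hφ))
  case invariant => simp only [hsemi, hinv, implies_true]

end Semiconjugacy

/-- Lemma 2.1: two conjugate actions by homeomorphisms on a compact metrizable probability
space give, via the push-forward under the conjugating homeomorphism, an invariant bounded
measurable cocycle `g` whose averaged cochain `ψ_{ρ₂}(g)` differs from `ψ_{ρ₁}(f)` by the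
coboundary of a bounded invariant `β : Γ² → ℝ`. -/
theorem pushforward_cocycle_cohomologous {Γ X : Type*} [Group Γ] [TopologicalSpace X]
    [CompactSpace X] [TopologicalSpace.MetrizableSpace X] [MeasurableSpace X] [BorelSpace X]
    (μ : Measure X) [IsProbabilityMeasure μ]
    (ρ₁ ρ₂ : Γ → X ≃ₜ X)
    (hρ₁mul : ∀ γ γ' : Γ, ∀ x, ρ₁ (γ * γ') x = ρ₁ γ (ρ₁ γ' x)) (hρ₁one : ∀ x, ρ₁ 1 x = x)
    (hρ₂mul : ∀ γ γ' : Γ, ∀ x, ρ₂ (γ * γ') x = ρ₂ γ (ρ₂ γ' x)) (hρ₂one : ∀ x, ρ₂ 1 x = x)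
    (h : X ≃ₜ X) (hconj : ∀ γ x, h (ρ₁ γ x) = ρ₂ γ (h x))
    (f : X → X → X → ℝ)
    (hbdd : ∃ C, ∀ x y z, |f x y z| ≤ C)
    (hmeas : Measurable fun p : X × X × X => f p.1 p.2.1 p.2.2)
    (hinvf : ∀ γ x y z, f (ρ₁ γ x) (ρ₁ γ y) (ρ₁ γ z) = f x y z)
    (hcoc : ∀ x₀ x₁ x₂ x₃, f x₁ x₂ x₃ - f x₀ x₂ x₃ + f x₀ x₁ x₃ - f x₀ x₁ x₂ = 0)
    (g : X → X → X → ℝ)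
    (hg : ∀ y₀ y₁ y₂, g y₀ y₁ y₂ = f (h.symm y₀) (h.symm y₁) (h.symm y₂)) :
    (∃ C, ∀ x y z, |g x y z| ≤ C) ∧
    (Measurable fun p : X × X × X => g p.1 p.2.1 p.2.2) ∧
    (∀ γ x y z, g (ρ₂ γ x) (ρ₂ γ y) (ρ₂ γ z) = g x y z) ∧
    (∀ x₀ x₁ x₂ x₃, g x₁ x₂ x₃ - g x₀ x₂ x₃ + g x₀ x₁ x₃ - g x₀ x₁ x₂ = 0) ∧
    ∃ β : Γ → Γ → ℝ,
      (∃ C, ∀ γ₀ γ₁, |β γ₀ γ₁| ≤ C) ∧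
      (∀ γ γ₀ γ₁ : Γ, β (γ * γ₀) (γ * γ₁) = β γ₀ γ₁) ∧
      (∀ γ₀ γ₁ γ₂ : Γ,
        psi μ (fun γ x => ρ₁ γ x) f γ₀ γ₁ γ₂ - psi μ (fun γ x => ρ₂ γ x) g γ₀ γ₁ γ₂ =
          β γ₁ γ₂ - β γ₀ γ₂ + β γ₀ γ₁) := by
  have hsemi (γ : Γ) (y : X) : h.symm (ρ₂ γ y) = ρ₁ γ (h.symm y) :=
    h.injective (by simp only [hconj, h.apply_symm_apply])
  exact pushforward_cocycle_cohomologous_general μ μ hρ₁mul (fun γ => (ρ₁ γ).measurable)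
    h.symm.measurable hsemi hbdd hmeas hinvf hcoc hg
end

section
/- The set X = {(x,y,z) ∈ (S¹)³ : x, y, z pairwise distinct} of pairwise distinct triples of points of the circle has exactly two connected components: the set P of positively oriented triples and the set N of negatively oriented triples. In particular, P and N are nonempty, open, connected, disjoint, and their union is X. -/
/-- The set of positively oriented pairwise distinct triples. -/
def posTriples : Set (UnitAddCircle × UnitAddCircle × UnitAddCircle) :=
  {p ∈ distinctTriples | PosOriented p.1 p.2.1 p.2.2}

/-- The set of negatively oriented pairwise distinct triples. -/
def negTriples : Set (UnitAddCircle × UnitAddCircle × UnitAddCircle) :=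
  {p ∈ distinctTriples | ¬ PosOriented p.1 p.2.1 p.2.2}

/-!
Positive orientation is the strict betweenness relation `sbtw` of the circular order on `ℝ/pℤ`, so
the circular order axioms split the pairwise distinct triples into the two cyclic orientations. The
positive ones are the image, under the open covering map `ℝ³ → (ℝ/pℤ)³`, of the open convex set of
lifts `a < b < c < a + p`, hence they are open and connected; exchanging the last two coordinates
carries this over to the negative ones.
-/

section CircularOrder

variable {α : Type*}

theorem pairwise_ne_of_sbtw [CircularPreorder α] {x y z : α} (h : sbtw x y z) :
    x ≠ y ∧ x ≠ z ∧ y ≠ z := by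
  refine ⟨?_, ?_, ?_⟩ <;> rintro rfl
  exacts [sbtw_irrefl_left h, sbtw_irrefl_left_right h, sbtw_irrefl_right h]

theorem sbtw_swap_iff [CircularOrder α] {x y z : α} :
    sbtw x z y ↔ (x ≠ y ∧ x ≠ z ∧ y ≠ z) ∧ ¬ sbtw x y z := by
  constructor
  · intro h
    obtain ⟨hxz, hxy, hzy⟩ := pairwise_ne_of_sbtw h
    exact ⟨⟨hxy, hxz, hzy.symm⟩, h.cyclic_left.not_sbtw⟩
  · rintro ⟨⟨hxy, hxz, hyz⟩, h⟩
    have hzyx : btw z y x := btw_iff_not_sbtw.2 h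
    refine (hzyx.sbtw_of_not_btw fun hxyz => ?_).cyclic_right
    rcases hxyz.antisymm hzyx with e | e | e
    exacts [hxy e, hyz e, hxz e.symm]

/-- The triples of points of a circular order that occur in this strict cyclic order. -/
def cyclicTriples (α : Type*) [SBtw α] : Set (α × α × α) :=
  {t | sbtw t.1 t.2.1 t.2.2}

/-- The triples of points of a circular order that occur in the strict cyclic order opposite to that
of `cyclicTriples`, encoded by exchanging the last two points. -/
def anticyclicTriples (α : Type*) [SBtw α] : Set (α × α × α) :=
  {t | sbtw t.1 t.2.2 t.2.1}

theorem disjoint_cyclicTriples_anticyclicTriples [CircularPreorder α] :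
    Disjoint (cyclicTriples α) (anticyclicTriples α) :=
  Set.disjoint_left.2 fun _ (h : sbtw _ _ _) (h' : sbtw _ _ _) => h.not_sbtw h'.cyclic_left

theorem cyclicTriples_union_anticyclicTriples [CircularOrder α] :
    cyclicTriples α ∪ anticyclicTriples α = {t | t.1 ≠ t.2.1 ∧ t.1 ≠ t.2.2 ∧ t.2.1 ≠ t.2.2} := by
  ext ⟨x, y, z⟩
  have hne : sbtw x y z → x ≠ y ∧ x ≠ z ∧ y ≠ z := pairwise_ne_of_sbtw
  change sbtw x y z ∨ sbtw x z y ↔ x ≠ y ∧ x ≠ z ∧ y ≠ z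
  rw [sbtw_swap_iff (z := z)]
  tauto

end CircularOrder

section OrderedLifts

variable {𝕜 : Type*} [AddCommGroup 𝕜] [LinearOrder 𝕜]

/-- The triples on the line lifting the triples of points of `AddCircle p` in strict cyclic order,
normalized to lie within one period starting at the first point. -/
def orderedLifts (p : 𝕜) : Set (𝕜 × 𝕜 × 𝕜) :=
  {t | t.1 < t.2.1 ∧ t.2.1 < t.2.2 ∧ t.2.2 < t.1 + p}

theorem orderedLifts_nonempty [DenselyOrdered 𝕜] {p : 𝕜} (hp : 0 < p) :
    (orderedLifts p).Nonempty := by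
  obtain ⟨c, hc, hcp⟩ := exists_between hp
  obtain ⟨b, hb, hbc⟩ := exists_between hc
  exact ⟨(0, b, c), hb, hbc, hcp.trans_eq (zero_add p).symm⟩

variable [IsOrderedAddMonoid 𝕜]

theorem isOpen_orderedLifts [TopologicalSpace 𝕜] [OrderTopology 𝕜] (p : 𝕜) :
    IsOpen (orderedLifts p) :=
  (isOpen_lt (by fun_prop) (by fun_prop)).inter <|
    (isOpen_lt (by fun_prop) (by fun_prop)).inter (isOpen_lt (by fun_prop) (by fun_prop))

variable [Archimedean 𝕜] {p : 𝕜} [hp : Fact (0 < p)]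

theorem sbtw_coe_iff {a b c : 𝕜} :
    sbtw (a : AddCircle p) b c ↔ toIocMod hp.out a b < toIcoMod hp.out a c := by
  rw [sbtw_iff_not_btw, btw_cyclic, QuotientAddGroup.btw_coe_iff, not_le]

theorem sbtw_iff_exists_orderedLifts {x y z : AddCircle p} :
    sbtw x y z ↔ ∃ a b c : 𝕜, (a, b, c) ∈ orderedLifts p ∧
      (a : AddCircle p) = x ∧ (b : AddCircle p) = y ∧ (c : AddCircle p) = z := by
  constructor
  · obtain ⟨a, rfl⟩ := QuotientAddGroup.mk_surjective x
    obtain ⟨b, rfl⟩ := QuotientAddGroup.mk_surjective y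
    obtain ⟨c, rfl⟩ := QuotientAddGroup.mk_surjective z
    intro h
    exact ⟨a, toIocMod hp.out a b, toIcoMod hp.out a c,
      ⟨left_lt_toIocMod hp.out a b, sbtw_coe_iff.1 h, toIcoMod_lt_right hp.out a c⟩, rfl,
      (QuotientAddGroup.equivIocMod hp.out a).symm_apply_apply b,
      (QuotientAddGroup.equivIcoMod hp.out a).symm_apply_apply c⟩
  · rintro ⟨a, b, c, ⟨hab, hbc, hca⟩, rfl, rfl, rfl⟩
    rw [sbtw_coe_iff, (toIocMod_eq_self hp.out).2 ⟨hab, (hbc.trans hca).le⟩,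
      (toIcoMod_eq_self hp.out).2 ⟨(hab.trans hbc).le, hca⟩]
    exact hbc

theorem cyclicTriples_eq_image_orderedLifts :
    cyclicTriples (AddCircle p) = Prod.map (↑) (Prod.map (↑) (↑)) '' orderedLifts p := by
  ext ⟨x, y, z⟩
  simp only [cyclicTriples, Set.mem_ofPred_eq, sbtw_iff_exists_orderedLifts,
    Set.mem_image, Prod.exists, Prod.map_apply, Prod.mk.injEq]

theorem isOpen_cyclicTriples [TopologicalSpace 𝕜] [OrderTopology 𝕜] :
    IsOpen (cyclicTriples (AddCircle p)) := by
  have hcoe : IsOpenMap ((↑) : 𝕜 → AddCircle p) := QuotientAddGroup.isOpenMap_coe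
  rw [cyclicTriples_eq_image_orderedLifts]
  exact hcoe.prodMap (hcoe.prodMap hcoe) _ (isOpen_orderedLifts p)

end OrderedLifts

theorem convex_orderedLifts {R : Type*} [CommRing R] [LinearOrder R] [IsStrictOrderedRing R]
    (p : R) : Convex R (orderedLifts p) := by
  refine convex_iff_forall_pos.2 ?_
  rintro ⟨a, b, c⟩ ⟨hab, hbc, hca⟩ ⟨a', b', c'⟩ ⟨hab', hbc', hca'⟩ s t hs ht hst
  refine ⟨add_lt_add (mul_lt_mul_of_pos_left hab hs) (mul_lt_mul_of_pos_left hab' ht),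
    add_lt_add (mul_lt_mul_of_pos_left hbc hs) (mul_lt_mul_of_pos_left hbc' ht), ?_⟩
  calc s * c + t * c' < s * (a + p) + t * (a' + p) := by gcongr
    _ = s * a + t * a' + (s + t) * p := by ring
    _ = s * a + t * a' + p := by rw [hst, one_mul]

theorem isConnected_cyclicTriples {p : ℝ} [hp : Fact (0 < p)] :
    IsConnected (cyclicTriples (AddCircle p)) := by
  have hcoe : Continuous ((↑) : ℝ → AddCircle p) := AddCircle.continuous_mk' p
  have hlifts : IsConnected (orderedLifts p) :=
    ⟨orderedLifts_nonempty hp.out, (convex_orderedLifts p).isPreconnected⟩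
  rw [cyclicTriples_eq_image_orderedLifts]
  exact hlifts.image _ (hcoe.prodMap (hcoe.prodMap hcoe)).continuousOn

theorem distinctTriples_two_components_general (p : ℝ) [Fact (0 < p)] :
    (cyclicTriples (AddCircle p)).Nonempty ∧ (anticyclicTriples (AddCircle p)).Nonempty ∧
    IsOpen (cyclicTriples (AddCircle p)) ∧ IsOpen (anticyclicTriples (AddCircle p)) ∧
    IsConnected (cyclicTriples (AddCircle p)) ∧ IsConnected (anticyclicTriples (AddCircle p)) ∧
    Disjoint (cyclicTriples (AddCircle p)) (anticyclicTriples (AddCircle p)) ∧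
    cyclicTriples (AddCircle p) ∪ anticyclicTriples (AddCircle p) =
      {t | t.1 ≠ t.2.1 ∧ t.1 ≠ t.2.2 ∧ t.2.1 ≠ t.2.2} := by
  let swap : AddCircle p × AddCircle p × AddCircle p ≃ₜ AddCircle p × AddCircle p × AddCircle p :=
    (Homeomorph.refl _).prodCongr (Homeomorph.prodComm _ _)
  have hswap : anticyclicTriples (AddCircle p) = swap ⁻¹' cyclicTriples (AddCircle p) := rfl
  have hconn : IsConnected (cyclicTriples (AddCircle p)) := isConnected_cyclicTriples
  have hconn' : IsConnected (anticyclicTriples (AddCircle p)) :=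
    hswap ▸ swap.isConnected_preimage.2 hconn
  have hopen' : IsOpen (anticyclicTriples (AddCircle p)) :=
    hswap ▸ isOpen_cyclicTriples.preimage swap.continuous
  exact ⟨hconn.nonempty, hconn'.nonempty, isOpen_cyclicTriples, hopen', hconn, hconn',
    disjoint_cyclicTriples_anticyclicTriples, cyclicTriples_union_anticyclicTriples⟩

theorem posOriented_iff_sbtw {x y z : UnitAddCircle} : PosOriented x y z ↔ sbtw x y z := by
  rw [sbtw_iff_exists_orderedLifts, PosOriented]
  simp only [orderedLifts, Set.mem_ofPred_eq]
  tauto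

theorem posTriples_eq_cyclicTriples : posTriples = cyclicTriples UnitAddCircle := by
  ext t
  exact ⟨fun h => posOriented_iff_sbtw.1 h.2,
    fun h => ⟨pairwise_ne_of_sbtw h, posOriented_iff_sbtw.2 h⟩⟩

theorem negTriples_eq_anticyclicTriples : negTriples = anticyclicTriples UnitAddCircle := by
  ext t
  exact (and_congr_right' posOriented_iff_sbtw.not).trans sbtw_swap_iff.symm

/-- The space of pairwise distinct triples of points of the circle has exactly two
connected components: the positively oriented triples and the negatively oriented
triples. Both are nonempty, open, connected, they are disjoint, and their union is the
whole set of pairwise distinct triples. -/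
theorem distinctTriples_two_components :
    posTriples.Nonempty ∧ negTriples.Nonempty ∧
    IsOpen posTriples ∧ IsOpen negTriples ∧
    IsConnected posTriples ∧ IsConnected negTriples ∧
    Disjoint posTriples negTriples ∧
    posTriples ∪ negTriples = distinctTriples := by
  rw [posTriples_eq_cyclicTriples, negTriples_eq_anticyclicTriples]
  exact distinctTriples_two_components_general 1
end
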